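/- Under the multi-leader assumption, the algebraic multiplicity of 0 as a root of the characteristic polynomial of the signed Laplacian L_s equals l₁ + l_{2SB}, and every nonzero complex eigenvalue of L_s has positive real part. -/

import Mathlib

open Matrix

/-- The signed incidence matrix of a signed digraph. -/
def Es {N M : ℕ} (head tail : Fin M → Fin N) (σ : Fin M → ℝ) : Matrix (Fin N) (Fin M) ℝ :=
  Matrix.of fun i k => if i = head k then 1 else if i = tail k then -σ k else 0

/-- The signed in-incidence matrix of a signed digraph. -/
def Ein {N M : ℕ} (head tail : Fin M → Fin N) (σ : Fin M → ℝ) : Matrix (Fin N) (Fin M) ℝ :=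
  Matrix.of fun i k => if i = tail k then -σ k else 0

/-- The signed Laplacian `L_s = E_{s⊙} E_sᵀ`. -/
def Ls {N M : ℕ} (head tail : Fin M → Fin N) (σ : Fin M → ℝ) : Matrix (Fin N) (Fin N) ℝ :=
  Ein head tail σ * (Es head tail σ)ᵀ

/-- The signed edge Laplacian `L_{e_s} = E_sᵀ E_{s⊙}`. -/
def Les {N M : ℕ} (head tail : Fin M → Fin N) (σ : Fin M → ℝ) : Matrix (Fin M) (Fin M) ℝ :=
  (Es head tail σ)ᵀ * Ein head tail σ

/-- Node `b` is reachable from node `a`. -/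
def Reaches {N M : ℕ} (head tail : Fin M → Fin N) : Fin N → Fin N → Prop :=
  Relation.ReflTransGen fun a b => ∃ k, head k = a ∧ tail k = b

/-- The digraph contains a directed spanning tree. -/
def HasSpanningTree {N M : ℕ} (head tail : Fin M → Fin N) : Prop :=
  ∃ r, ∀ b, Reaches head tail r b

/-- A root node: a node that is the tail of no edge. -/
def IsRootNode {N M : ℕ} (tail : Fin M → Fin N) (i : Fin N) : Prop :=
  ∀ k, tail k ≠ i

/-- Structural balance of a signed digraph. -/
def StructBalanced {N M : ℕ} (head tail : Fin M → Fin N) (σ : Fin M → ℝ) : Prop :=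
  ∃ d : Fin N → ℝ, (∀ i, d i = 1 ∨ d i = -1) ∧ ∀ k, d (head k) * d (tail k) = σ k

/-- A rooted strongly connected component. -/
def IsRootedSCC {N M : ℕ} (head tail : Fin M → Fin N) (S : Finset (Fin N)) : Prop :=
  2 ≤ S.card ∧ (∀ k, tail k ∈ S → head k ∈ S) ∧
    ∀ a ∈ S, ∀ b ∈ S, Reaches head tail a b

/-- Structural balance of a rooted SCC. -/
def SCCBalanced {N M : ℕ} (head tail : Fin M → Fin N) (σ : Fin M → ℝ)
    (S : Finset (Fin N)) : Prop :=
  ∃ d : Fin N → ℝ, (∀ i ∈ S, d i = 1 ∨ d i = -1) ∧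
    ∀ k, head k ∈ S → tail k ∈ S → d (head k) * d (tail k) = σ k

/-!
By Gershgorin's theorem the eigenvalues of a weakly diagonally dominant real matrix `A` lie in discs
of the right half-plane that touch the imaginary axis only at `0`. For small `c > 0` the map
`1 - c A` does not increase the sup norm, whereas a Jordan block of size at least two at the
eigenvalue `0` would make its iterates grow linearly; hence `0` is semisimple and its multiplicity
is `dim ker A`.

For `A = L_s`, a kernel vector propagates its maximal modulus backwards along edges, so it attains
it on a whole source component (a strongly connected set that no edge enters), which is then
balanced. Thus a kernel vector is determined by its values at one node of each balanced source
component, and a Dirichlet problem shows that these values are arbitrary. The balanced source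
components are the singletons of root nodes and the balanced rooted SCCs.
-/

section LinearAlgebra

open Module

theorem map_eq_zero_of_map_map_eq_zero_of_norm_sub_smul_le {E : Type*} [NormedAddCommGroup E]
    [NormedSpace ℝ E] {f : E →ₗ[ℝ] E} {c : ℝ} (hc : c ≠ 0) (hf : ∀ x, ‖x - c • f x‖ ≤ ‖x‖) {y : E}
    (hy : f (f y) = 0) : f y = 0 := by
  have iterate_le : ∀ n : ℕ, ‖y - (n * c) • f y‖ ≤ ‖y‖ := by
    intro n
    induction n with
    | zero => simp
    | succ n ih =>
      calc ‖y - ((n + 1 : ℕ) * c) • f y‖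
          = ‖(y - (n * c) • f y) - c • f (y - (n * c) • f y)‖ := by
            rw [map_sub, map_smul, hy]
            congr 1
            push_cast
            module
        _ ≤ ‖y - (n * c) • f y‖ := hf _
        _ ≤ ‖y‖ := ih
  have linear_growth_le (n : ℕ) : n • (|c| * ‖f y‖) ≤ 2 * ‖y‖ :=
    calc n • (|c| * ‖f y‖) = ‖y - (y - (n * c) • f y)‖ := by
          rw [sub_sub_cancel, norm_smul, Real.norm_eq_abs, abs_mul, Nat.abs_cast, nsmul_eq_mul,
            mul_assoc]
      _ ≤ ‖y‖ + ‖y - (n * c) • f y‖ := norm_sub_le _ _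
      _ ≤ 2 * ‖y‖ := by linarith [iterate_le n]
  by_contra hne
  obtain ⟨n, hn⟩ := exists_lt_nsmul (show 0 < |c| * ‖f y‖ by positivity) (2 * ‖y‖)
  exact (linear_growth_le n).not_gt hn

theorem maxGenEigenspace_zero_eq_ker {K V : Type*} [Field K] [AddCommGroup V] [Module K V]
    {f : End K V} (hf : ∀ y, f (f y) = 0 → f y = 0) : f.maxGenEigenspace 0 = LinearMap.ker f := by
  have ker_eq_ker_sq : LinearMap.ker (f ^ 1) = LinearMap.ker (f ^ 2) := by
    ext y
    simp only [pow_one, sq, LinearMap.mem_ker, End.mul_apply]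
    exact ⟨fun hy ↦ by rw [hy, map_zero], hf y⟩
  ext y
  rw [End.mem_maxGenEigenspace, zero_smul, sub_zero]
  refine ⟨fun ⟨n, hn⟩ ↦ ?_, fun hy ↦ ⟨1, by rwa [pow_one]⟩⟩
  rw [← pow_one f, End.ker_pow_constant ker_eq_ker_sq n, LinearMap.mem_ker, pow_add,
    End.mul_apply, hn, map_zero]

theorem finrank_eq_card_of_interpolation {K n ι : Type*} [Field K] [Fintype ι] [DecidableEq ι]
    (W : Submodule K (n → K)) (p : ι → n) (eq_zero : ∀ x ∈ W, (∀ t, x (p t) = 0) → x = 0)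
    (exists_single : ∀ t, ∃ x ∈ W, x ∘ p = Pi.single t 1) : finrank K W = Fintype.card ι := by
  let eval : W →ₗ[K] (ι → K) := LinearMap.funLeft K K p ∘ₗ W.subtype
  have eval_injective : Function.Injective eval :=
    (injective_iff_map_eq_zero eval).2 fun x hx ↦ Subtype.ext (eq_zero x x.2 (congrFun hx))
  have eval_surjective : Function.Surjective eval := by
    rw [← LinearMap.range_eq_top, ← top_le_iff, ← (Pi.basisFun K ι).span_eq, Submodule.span_le]
    rintro _ ⟨t, rfl⟩
    obtain ⟨x, hxW, hx⟩ := exists_single t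
    exact ⟨⟨x, hxW⟩, hx.trans (Pi.basisFun_apply K ι t).symm⟩
  rw [(LinearEquiv.ofBijective eval ⟨eval_injective, eval_surjective⟩).finrank_eq,
    finrank_fintype_fun_eq_card]

theorem exists_solution_of_dirichlet_unique {K n : Type*} [Field K] [Fintype n]
    (A : Matrix n n K) (B : Set n)
    (unique : ∀ x : n → K, (∀ i ∈ B, x i = 0) → (∀ i ∉ B, (A *ᵥ x) i = 0) → x = 0) (f : n → K) :
    ∃ x : n → K, (∀ i ∈ B, x i = f i) ∧ ∀ i ∉ B, (A *ᵥ x) i = 0 := by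
  classical
  let D : Matrix n n K := of fun i ↦ if i ∈ B then Pi.single i 1 else A i
  have D_mulVec_of_mem (x : n → K) {i : n} (hi : i ∈ B) : (D *ᵥ x) i = x i := by
    simp [D, mulVec, hi]
  have D_mulVec_of_notMem (x : n → K) {i : n} (hi : i ∉ B) : (D *ᵥ x) i = (A *ᵥ x) i := by
    simp [D, mulVec, hi]
  have D_injective : Function.Injective D.mulVecLin :=
    (injective_iff_map_eq_zero D.mulVecLin).2 fun x hx ↦ unique x
      (fun i hi ↦ (D_mulVec_of_mem x hi).symm.trans (congrFun hx i))
      (fun i hi ↦ (D_mulVec_of_notMem x hi).symm.trans (congrFun hx i))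
  obtain ⟨x, hx⟩ := LinearMap.injective_iff_surjective.1 D_injective (B.indicator f)
  refine ⟨x, fun i hi ↦ ?_, fun i hi ↦ ?_⟩
  · rw [← D_mulVec_of_mem x hi, ← mulVecLin_apply, hx, Set.indicator_of_mem hi]
  · rw [← D_mulVec_of_notMem x hi, ← mulVecLin_apply, hx, Set.indicator_of_notMem hi]

end LinearAlgebra

/-- Weak row diagonal dominance of a real matrix. The diagonal entry itself, not its absolute value,
dominates, so the diagonal is nonnegative. -/
def IsWeaklyDiagDominant {n : Type*} [Fintype n] [DecidableEq n] (A : Matrix n n ℝ) : Prop :=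
  ∀ i, ∑ j ∈ Finset.univ.erase i, |A i j| ≤ A i i

namespace IsWeaklyDiagDominant

open Module

variable {n : Type*} [Fintype n] [DecidableEq n] {A : Matrix n n ℝ}

theorem diag_nonneg (hA : IsWeaklyDiagDominant A) (i : n) : 0 ≤ A i i :=
  (Finset.sum_nonneg fun _ _ ↦ abs_nonneg _).trans (hA i)

theorem re_pos_of_isRoot_charpoly (hA : IsWeaklyDiagDominant A) {μ : ℂ}
    (hμ : (A.map ((↑) : ℝ → ℂ)).charpoly.IsRoot μ) (hμ0 : μ ≠ 0) : 0 < μ.re := by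
  rw [← charpoly_toLin', ← End.hasEigenvalue_iff_isRoot_charpoly] at hμ
  obtain ⟨i, hi⟩ := eigenvalue_mem_ball hμ
  have norm_sub_diag_le : ‖μ - A i i‖ ≤ A i i := by
    refine (mem_closedBall_iff_norm.1 hi).trans ?_
    simpa only [map_apply, Complex.norm_real, Real.norm_eq_abs] using hA i
  have sq_le : (μ.re - A i i) ^ 2 + μ.im ^ 2 ≤ A i i ^ 2 := by
    have := pow_le_pow_left₀ (norm_nonneg _) norm_sub_diag_le 2
    rw [← Complex.normSq_eq_norm_sq, Complex.normSq_apply] at this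
    simpa [sq] using this
  have normSq_pos : 0 < μ.re * μ.re + μ.im * μ.im := Complex.normSq_pos.2 hμ0
  nlinarith [hA.diag_nonneg i]

theorem norm_sub_smul_mulVec_le (hA : IsWeaklyDiagDominant A) {c : ℝ} (hc : 0 ≤ c)
    (hcA : ∀ i, c * A i i ≤ 1) (x : n → ℝ) : ‖x - c • A *ᵥ x‖ ≤ ‖x‖ := by
  refine (pi_norm_le_iff_of_nonneg (norm_nonneg x)).2 fun i ↦ ?_
  have off_diag_le : |∑ j ∈ Finset.univ.erase i, A i j * x j| ≤ A i i * ‖x‖ :=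
    calc |∑ j ∈ Finset.univ.erase i, A i j * x j|
        ≤ ∑ j ∈ Finset.univ.erase i, |A i j| * ‖x‖ := by
          refine (Finset.abs_sum_le_sum_abs _ _).trans (Finset.sum_le_sum fun j _ ↦ ?_)
          rw [abs_mul]
          gcongr
          exact norm_le_pi_norm x j
      _ ≤ A i i * ‖x‖ := by
          rw [← Finset.sum_mul]
          gcongr
          exact hA i
  have mulVec_eq : (A *ᵥ x) i = A i i * x i + ∑ j ∈ Finset.univ.erase i, A i j * x j :=
    (Finset.add_sum_erase _ _ (Finset.mem_univ i)).symm
  calc ‖(x - c • A *ᵥ x) i‖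
      = |(1 - c * A i i) * x i - c * ∑ j ∈ Finset.univ.erase i, A i j * x j| := by
        rw [Pi.sub_apply, Pi.smul_apply, mulVec_eq, smul_eq_mul, Real.norm_eq_abs]
        ring_nf
    _ ≤ (1 - c * A i i) * |x i| + c * |∑ j ∈ Finset.univ.erase i, A i j * x j| := by
        refine (abs_sub _ _).trans_eq ?_
        rw [abs_mul, abs_mul, abs_of_nonneg (sub_nonneg.2 (hcA i)), abs_of_nonneg hc]
    _ ≤ (1 - c * A i i) * ‖x‖ + c * (A i i * ‖x‖) := by
        gcongr
        · exact sub_nonneg.2 (hcA i)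
        · exact norm_le_pi_norm x i
    _ = ‖x‖ := by ring

theorem exists_norm_sub_smul_mulVec_le (hA : IsWeaklyDiagDominant A) :
    ∃ c : ℝ, c ≠ 0 ∧ ∀ x, ‖x - c • A *ᵥ x‖ ≤ ‖x‖ := by
  have trace_nonneg : 0 ≤ A.trace := Finset.sum_nonneg fun i _ ↦ hA.diag_nonneg i
  have diag_le_trace (i : n) : A i i ≤ A.trace :=
    Finset.single_le_sum (fun j _ ↦ hA.diag_nonneg j) (Finset.mem_univ i)
  refine ⟨(1 + A.trace)⁻¹, by positivity,
    hA.norm_sub_smul_mulVec_le (by positivity) fun i ↦ ?_⟩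
  rw [inv_mul_le_one₀ (by positivity)]
  linarith [diag_le_trace i]

theorem rootMultiplicity_zero_charpoly (hA : IsWeaklyDiagDominant A) :
    (A.map ((↑) : ℝ → ℂ)).charpoly.rootMultiplicity 0 =
      finrank ℝ (LinearMap.ker (toLin' A)) := by
  obtain ⟨c, hc, norm_le⟩ := hA.exists_norm_sub_smul_mulVec_le
  calc (A.map ((↑) : ℝ → ℂ)).charpoly.rootMultiplicity 0
      = (A.charpoly.map Complex.ofRealHom).rootMultiplicity (Complex.ofRealHom 0) := by
        rw [← charpoly_map, map_zero]
        rfl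
    _ = (toLin' A).charpoly.rootMultiplicity 0 := by
        rw [← Polynomial.eq_rootMultiplicity_map Complex.ofReal_injective, charpoly_toLin']
    _ = finrank ℝ (LinearMap.ker (toLin' A)) := by
        rw [← LinearMap.finrank_maxGenEigenspace_eq, maxGenEigenspace_zero_eq_ker]
        exact fun y ↦ map_eq_zero_of_map_map_eq_zero_of_norm_sub_smul_le hc fun x ↦ by
          rw [toLin'_apply]
          exact norm_le x

end IsWeaklyDiagDominant

/-- A source component of a digraph: a nonempty strongly connected set of nodes that no edge enters
from outside. Unlike `IsRootedSCC` it may be a singleton, so it covers the root nodes as well. -/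
def IsSourceComponent {N M : ℕ} (head tail : Fin M → Fin N) (T : Finset (Fin N)) : Prop :=
  T.Nonempty ∧ (∀ k, tail k ∈ T → head k ∈ T) ∧ ∀ a ∈ T, ∀ b ∈ T, Reaches head tail a b

section SourceComponents

variable {N M : ℕ} {head tail : Fin M → Fin N} {σ : Fin M → ℝ} {T T' : Finset (Fin N)}

theorem Reaches.of_step_backward {P : Fin N → Prop} (step : ∀ k, P (tail k) → P (head k))
    {a b : Fin N} (hab : Reaches head tail a b) (hb : P b) : P a := by
  induction hab using Relation.ReflTransGen.head_induction_on with
  | refl => exact hb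
  | head hac _ ih =>
    obtain ⟨k, rfl, rfl⟩ := hac
    exact step k ih

theorem IsSourceComponent.subset_of_mem (hT : IsSourceComponent head tail T)
    (hT' : IsSourceComponent head tail T') {i : Fin N} (hi : i ∈ T) (hi' : i ∈ T') : T ⊆ T' :=
  fun b hb ↦ (hT.2.2 b hb i hi).of_step_backward hT'.2.1 hi'

theorem IsSourceComponent.eq_of_mem (hT : IsSourceComponent head tail T)
    (hT' : IsSourceComponent head tail T') {i : Fin N} (hi : i ∈ T) (hi' : i ∈ T') : T = T' :=
  (hT.subset_of_mem hT' hi hi').antisymm (hT'.subset_of_mem hT hi' hi)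

theorem exists_isSourceComponent_reaches (head tail : Fin M → Fin N) (i : Fin N) :
    ∃ T, IsSourceComponent head tail T ∧ ∃ a ∈ T, Reaches head tail a i := by
  classical
  let ancestors (a : Fin N) : Finset (Fin N) := {b | Reaches head tail b a}
  have mem_ancestors {a b : Fin N} : b ∈ ancestors a ↔ Reaches head tail b a := by
    simp [ancestors]
  have self_mem (a : Fin N) : a ∈ ancestors a := mem_ancestors.2 .refl
  -- A node above `i` with fewest ancestors is an ancestor of each of its own ancestors.
  obtain ⟨a, hai, a_min⟩ :=
    Finset.exists_min_image (ancestors i) (fun a ↦ (ancestors a).card) ⟨i, self_mem i⟩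
  rw [mem_ancestors] at hai
  have reaches_ancestor {b : Fin N} (hba : Reaches head tail b a) : Reaches head tail a b := by
    have ancestors_subset : ancestors b ⊆ ancestors a :=
      fun c hc ↦ mem_ancestors.2 ((mem_ancestors.1 hc).trans hba)
    have ancestors_eq : ancestors b = ancestors a :=
      Finset.eq_of_subset_of_card_le ancestors_subset (a_min b (mem_ancestors.2 (hba.trans hai)))
    exact mem_ancestors.1 (ancestors_eq ▸ self_mem a)
  refine ⟨ancestors a, ⟨⟨a, self_mem a⟩, fun k hk ↦ ?_, fun b hb c hc ↦ ?_⟩, a, self_mem a, hai⟩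
  · exact mem_ancestors.2 ((mem_ancestors.1 hk).head ⟨k, rfl, rfl⟩)
  · exact (mem_ancestors.1 hb).trans (reaches_ancestor (mem_ancestors.1 hc))

theorem isSourceComponent_singleton_iff (hht : ∀ k, head k ≠ tail k) {i : Fin N} :
    IsSourceComponent head tail {i} ↔ IsRootNode tail i := by
  constructor
  · rintro ⟨-, hclosed, -⟩ k rfl
    exact hht k (Finset.mem_singleton.1 (hclosed k (Finset.mem_singleton_self _)))
  · intro hi
    refine ⟨Finset.singleton_nonempty i, fun k hk ↦ absurd (Finset.mem_singleton.1 hk) (hi k),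
      fun a ha b hb ↦ ?_⟩
    rw [Finset.mem_singleton.1 ha, Finset.mem_singleton.1 hb]
    exact .refl

theorem sccBalanced_singleton (hht : ∀ k, head k ≠ tail k) (i : Fin N) :
    SCCBalanced head tail σ {i} :=
  ⟨1, fun _ _ ↦ .inl rfl, fun k hhead htail ↦
    absurd ((Finset.mem_singleton.1 hhead).trans (Finset.mem_singleton.1 htail).symm) (hht k)⟩

theorem isSourceComponent_iff (hht : ∀ k, head k ≠ tail k) :
    IsSourceComponent head tail T ↔
      (∃ i, IsRootNode tail i ∧ {i} = T) ∨ IsRootedSCC head tail T := by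
  constructor
  · intro hT
    rcases (Nat.succ_le_of_lt hT.1.card_pos).eq_or_lt with card_eq_one | one_lt_card
    · obtain ⟨i, rfl⟩ := Finset.card_eq_one.1 card_eq_one.symm
      exact .inl ⟨i, (isSourceComponent_singleton_iff hht).1 hT, rfl⟩
    · exact .inr ⟨one_lt_card, hT.2⟩
  · rintro (⟨i, hi, rfl⟩ | hT)
    · exact (isSourceComponent_singleton_iff hht).2 hi
    · exact ⟨Finset.card_pos.1 (zero_lt_two.trans_le hT.1), hT.2⟩

theorem ncard_balanced_isSourceComponent (hht : ∀ k, head k ≠ tail k) :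
    {T | IsSourceComponent head tail T ∧ SCCBalanced head tail σ T}.ncard =
      {i | IsRootNode tail i}.ncard +
        {T | IsRootedSCC head tail T ∧ SCCBalanced head tail σ T}.ncard := by
  have eq_union : {T | IsSourceComponent head tail T ∧ SCCBalanced head tail σ T} =
      singleton '' {i | IsRootNode tail i} ∪
        {T | IsRootedSCC head tail T ∧ SCCBalanced head tail σ T} := by
    ext T
    simp only [isSourceComponent_iff hht, or_and_right, Set.mem_union, Set.mem_image,
      Set.mem_ofPred_eq]
    refine or_congr_left ⟨And.left, fun h ↦ ⟨h, ?_⟩⟩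
    obtain ⟨i, -, rfl⟩ := h
    exact sccBalanced_singleton hht i
  have disjoint : Disjoint (singleton '' {i | IsRootNode tail i})
      {T | IsRootedSCC head tail T ∧ SCCBalanced head tail σ T} := by
    rw [Set.disjoint_left]
    rintro _ ⟨i, -, rfl⟩ ⟨⟨two_le_card, -⟩, -⟩
    simp at two_le_card
  rw [eq_union, Set.ncard_union_eq disjoint,
    Set.ncard_image_of_injective _ Finset.singleton_injective]

theorem ncard_balanced_isRootedSCC {ι : Type*} {S : ι → Finset (Fin N)}
    (hSCCs : ∀ j, IsRootedSCC head tail (S j))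
    (hall : ∀ T : Finset (Fin N), IsRootedSCC head tail T → ∃ j, T = S j)
    (hdisj : ∀ j j', j ≠ j' → Disjoint (S j) (S j')) :
    {T | IsRootedSCC head tail T ∧ SCCBalanced head tail σ T}.ncard =
      {j | SCCBalanced head tail σ (S j)}.ncard := by
  have S_injective : Function.Injective S := by
    intro j j' hjj'
    by_contra hne
    have S_empty : S j = ∅ := Finset.disjoint_self_iff_empty _ |>.1 (hjj' ▸ hdisj j j' hne)
    simpa [S_empty] using (hSCCs j).1
  rw [← Set.ncard_image_of_injective _ S_injective]
  congr 1
  ext T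
  constructor
  · rintro ⟨hT, hbal⟩
    obtain ⟨j, rfl⟩ := hall T hT
    exact ⟨j, hbal, rfl⟩
  · rintro ⟨j, hbal, rfl⟩
    exact ⟨hSCCs j, hbal⟩

end SourceComponents

section SignedLaplacian

variable {N M : ℕ} {head tail : Fin M → Fin N} {σ : Fin M → ℝ} {T : Finset (Fin N)}

theorem Es_transpose_mulVec_apply (hht : ∀ k, head k ≠ tail k) (x : Fin N → ℝ) (k : Fin M) :
    ((Es head tail σ)ᵀ *ᵥ x) k = x (head k) - σ k * x (tail k) := by
  have column_eq : (fun j ↦ Es head tail σ j k) =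
      Pi.single (head k) 1 - Pi.single (tail k) (σ k) := by
    ext j
    rcases eq_or_ne j (head k) with rfl | hj
    · simp [Es, hht k]
    · simp [Es, hj, Pi.single_apply, neg_ite]
  simp [mulVec, column_eq]

theorem Ls_mulVec_apply (hht : ∀ k, head k ≠ tail k) (hσ : ∀ k, σ k = 1 ∨ σ k = -1)
    (x : Fin N → ℝ) (i : Fin N) :
    (Ls head tail σ *ᵥ x) i = ∑ k with tail k = i, (x i - σ k * x (head k)) := by
  rw [Ls, ← mulVec_mulVec, mulVec, dotProduct, Finset.sum_filter]
  refine Finset.sum_congr rfl fun k _ ↦ ?_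
  rw [Es_transpose_mulVec_apply hht, Ein, of_apply, ite_mul, zero_mul]
  simp only [eq_comm (a := i)]
  split_ifs with hk
  · subst hk
    linear_combination x (tail k) * sq_eq_one_iff.2 (hσ k)
  · rfl

theorem isWeaklyDiagDominant_Ls (hht : ∀ k, head k ≠ tail k) (hσ : ∀ k, σ k = 1 ∨ σ k = -1) :
    IsWeaklyDiagDominant (Ls head tail σ) := by
  intro i
  let edgeRow (k : Fin M) (j : Fin N) : ℝ :=
    (if i = j then 1 else 0) - if head k = j then σ k else 0
  have entry_eq (j : Fin N) : Ls head tail σ i j = ∑ k with tail k = i, edgeRow k j := by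
    simpa [Pi.single_apply, edgeRow] using Ls_mulVec_apply hht hσ (Pi.single j 1) i
  have edgeRow_dominant (k : Fin M) (hk : tail k = i) :
      ∑ j ∈ Finset.univ.erase i, |edgeRow k j| ≤ edgeRow k i := by
    have head_ne : head k ≠ i := hk ▸ hht k
    calc ∑ j ∈ Finset.univ.erase i, |edgeRow k j|
        = ∑ j ∈ Finset.univ.erase i, if head k = j then |σ k| else 0 := by
          refine Finset.sum_congr rfl fun j hj ↦ ?_
          simp [edgeRow, (Finset.ne_of_mem_erase hj).symm, apply_ite abs]
      _ = |σ k| := by simp [head_ne]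
      _ = 1 := (abs_eq zero_le_one).2 (hσ k)
      _ ≤ edgeRow k i := by simp [edgeRow, head_ne]
  calc ∑ j ∈ Finset.univ.erase i, |Ls head tail σ i j|
      ≤ ∑ j ∈ Finset.univ.erase i, ∑ k with tail k = i, |edgeRow k j| := by
        simp only [entry_eq]
        exact Finset.sum_le_sum fun j _ ↦ Finset.abs_sum_le_sum_abs _ _
    _ = ∑ k with tail k = i, ∑ j ∈ Finset.univ.erase i, |edgeRow k j| := Finset.sum_comm
    _ ≤ ∑ k with tail k = i, edgeRow k i :=
        Finset.sum_le_sum fun k hk ↦ edgeRow_dominant k (Finset.mem_filter.1 hk).2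
    _ = Ls head tail σ i i := (entry_eq i).symm

theorem apply_tail_eq_sign_mul_apply_head (hht : ∀ k, head k ≠ tail k)
    (hσ : ∀ k, σ k = 1 ∨ σ k = -1) {x : Fin N → ℝ} {k : Fin M}
    (hmax : ∀ j, |x j| ≤ |x (tail k)|) (hx : (Ls head tail σ *ᵥ x) (tail k) = 0) :
    x (tail k) = σ k * x (head k) := by
  set i := tail k with hi
  have term_nonneg (l : Fin M) : 0 ≤ x i * (x i - σ l * x (head l)) := by
    have : x i * (σ l * x (head l)) ≤ x i * x i :=
      calc x i * (σ l * x (head l)) ≤ |x i * (σ l * x (head l))| := le_abs_self _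
        _ = |x i| * |x (head l)| := by
            rw [abs_mul, abs_mul, (abs_eq zero_le_one).2 (hσ l), one_mul]
        _ ≤ |x i| * |x i| := mul_le_mul_of_nonneg_left (hmax _) (abs_nonneg _)
        _ = x i * x i := abs_mul_abs_self _
    linarith
  have sum_eq_zero : ∑ l with tail l = i, x i * (x i - σ l * x (head l)) = 0 := by
    rw [← Finset.mul_sum, ← Ls_mulVec_apply hht hσ, hx, mul_zero]
  have term_eq_zero : x i * (x i - σ k * x (head k)) = 0 :=
    (Finset.sum_eq_zero_iff_of_nonneg fun l _ ↦ term_nonneg l).1 sum_eq_zero k (by simp [hi])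
  rcases mul_eq_zero.1 term_eq_zero with xi_eq_zero | sub_eq
  · have head_eq_zero : x (head k) = 0 := by simpa [xi_eq_zero] using hmax (head k)
    rw [xi_eq_zero, head_eq_zero, mul_zero]
  · exact sub_eq_zero.1 sub_eq

theorem sccBalanced_of_abs_eq {x : Fin N → ℝ} {m : ℝ} (hm : 0 < m)
    (habs : ∀ i ∈ T, |x i| = m) (hx : ∀ k, tail k ∈ T → x (tail k) = σ k * x (head k)) :
    SCCBalanced head tail σ T := by
  refine ⟨fun i ↦ x i / m, fun i hi ↦ ?_, fun k hhead htail ↦ ?_⟩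
  · rw [← abs_eq zero_le_one, abs_div, habs i hi, abs_of_pos hm, div_self hm.ne']
  · have head_sq : x (head k) ^ 2 = m ^ 2 := by rw [← sq_abs, habs _ hhead]
    change x (head k) / m * (x (tail k) / m) = σ k
    rw [hx k htail]
    field_simp
    rw [head_sq]

theorem exists_balanced_isSourceComponent_of_ne_zero (hht : ∀ k, head k ≠ tail k)
    (hσ : ∀ k, σ k = 1 ∨ σ k = -1) {x : Fin N → ℝ} (hx0 : x ≠ 0)
    (hx : ∀ i, x i = 0 ∨ (Ls head tail σ *ᵥ x) i = 0) :
    ∃ T, IsSourceComponent head tail T ∧ SCCBalanced head tail σ T ∧ ∀ i ∈ T, x i ≠ 0 := by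
  obtain ⟨i₀, hi₀⟩ := Function.ne_iff.1 hx0
  have : Nonempty (Fin N) := ⟨i₀⟩
  obtain ⟨i, hmax⟩ := Finite.exists_max fun j ↦ |x j|
  have max_pos : 0 < |x i| := (abs_pos.2 hi₀).trans_le (hmax i₀)
  have edge_eq (k : Fin M) (hk : |x (tail k)| = |x i|) : x (tail k) = σ k * x (head k) := by
    have tail_ne : x (tail k) ≠ 0 := abs_pos.1 (hk ▸ max_pos)
    exact apply_tail_eq_sign_mul_apply_head hht hσ (hk ▸ hmax) ((hx _).resolve_left tail_ne)
  have abs_step (k : Fin M) (hk : |x (tail k)| = |x i|) : |x (head k)| = |x i| := by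
    rw [← hk, edge_eq k hk, abs_mul, (abs_eq zero_le_one).2 (hσ k), one_mul]
  obtain ⟨T, hT, a, haT, hai⟩ := exists_isSourceComponent_reaches head tail i
  have abs_eq_max (b : Fin N) (hb : b ∈ T) : |x b| = |x i| :=
    Reaches.of_step_backward (P := fun b ↦ |x b| = |x i|) abs_step
      ((hT.2.2 b hb a haT).trans hai) rfl
  exact ⟨T, hT, sccBalanced_of_abs_eq max_pos abs_eq_max fun k hk ↦ edge_eq k (abs_eq_max _ hk),
    fun b hb ↦ abs_pos.1 (abs_eq_max b hb ▸ max_pos)⟩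

theorem exists_Ls_mulVec_eq_zero_extending (hht : ∀ k, head k ≠ tail k)
    (hσ : ∀ k, σ k = 1 ∨ σ k = -1) {f : Fin N → ℝ}
    (hf : ∀ T, IsSourceComponent head tail T → ∀ k, tail k ∈ T → f (tail k) = σ k * f (head k)) :
    ∃ x, Ls head tail σ *ᵥ x = 0 ∧ ∀ T, IsSourceComponent head tail T → ∀ i ∈ T, x i = f i := by
  obtain ⟨x, x_eq_f, harmonic⟩ := exists_solution_of_dirichlet_unique (Ls head tail σ)
    {i | ∃ T, IsSourceComponent head tail T ∧ i ∈ T} (fun x zero_on harmonic_off ↦ by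
      by_contra hx0
      obtain ⟨T, hT, -, hne⟩ := exists_balanced_isSourceComponent_of_ne_zero hht hσ hx0
        fun i ↦ or_iff_not_imp_left.2 fun hi ↦ harmonic_off i (mt (zero_on i) hi)
      obtain ⟨i, hi⟩ := hT.1
      exact hne i hi (zero_on i ⟨T, hT, hi⟩)) f
  refine ⟨x, funext fun i ↦ ?_, fun T hT i hi ↦ x_eq_f i ⟨T, hT, hi⟩⟩
  by_cases hi : ∃ T, IsSourceComponent head tail T ∧ i ∈ T
  · obtain ⟨T, hT, hiT⟩ := hi
    rw [Ls_mulVec_apply hht hσ]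
    refine Finset.sum_eq_zero fun k hk ↦ ?_
    obtain rfl := (Finset.mem_filter.1 hk).2
    rw [x_eq_f _ ⟨T, hT, hiT⟩, x_eq_f _ ⟨T, hT, hT.2.1 k hiT⟩, hf T hT k hiT, sub_self]
  · exact harmonic i hi

theorem exists_Ls_mulVec_eq_zero_of_sccBalanced (hht : ∀ k, head k ≠ tail k)
    (hσ : ∀ k, σ k = 1 ∨ σ k = -1) (hT : IsSourceComponent head tail T)
    (hbal : SCCBalanced head tail σ T) {r : Fin N} (hr : r ∈ T) :
    ∃ x, Ls head tail σ *ᵥ x = 0 ∧ x r = 1 ∧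
      ∀ T', IsSourceComponent head tail T' → T' ≠ T → ∀ i ∈ T', x i = 0 := by
  obtain ⟨d, d_sign, d_gauge⟩ := hbal
  have d_sq {i : Fin N} (hi : i ∈ T) : d i * d i = 1 := by
    rw [← sq, sq_eq_one_iff]
    exact d_sign i hi
  let f : Fin N → ℝ := fun i ↦ if i ∈ T then d r * d i else 0
  have f_eq_zero {T' : Finset (Fin N)} (hT' : IsSourceComponent head tail T') (hne : T' ≠ T)
      {i : Fin N} (hi : i ∈ T') : f i = 0 :=
    if_neg fun hiT ↦ hne (hT'.eq_of_mem hT hi hiT)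
  obtain ⟨x, hx, x_eq_f⟩ := exists_Ls_mulVec_eq_zero_extending hht hσ (f := f) (by
    intro T' hT' k hk
    have hhead : head k ∈ T' := hT'.2.1 k hk
    by_cases hne : T' = T
    · subst hne
      simp only [f, if_pos hk, if_pos hhead, ← d_gauge k hhead hk]
      linear_combination -(d r * d (tail k)) * d_sq hhead
    · rw [f_eq_zero hT' hne hk, f_eq_zero hT' hne hhead, mul_zero])
  refine ⟨x, hx, ?_, fun T' hT' hne i hi ↦ (x_eq_f T' hT' i hi).trans (f_eq_zero hT' hne hi)⟩
  rw [x_eq_f T hT r hr]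
  exact (if_pos hr).trans (d_sq hr)

theorem finrank_ker_Ls (hht : ∀ k, head k ≠ tail k) (hσ : ∀ k, σ k = 1 ∨ σ k = -1) :
    Module.finrank ℝ (LinearMap.ker (toLin' (Ls head tail σ))) =
      {T | IsSourceComponent head tail T ∧ SCCBalanced head tail σ T}.ncard := by
  classical
  let 𝒞 := {T // IsSourceComponent head tail T ∧ SCCBalanced head tail σ T}
  have representative (T : 𝒞) : ∃ r, r ∈ T.1 := T.2.1.1
  choose r hr using representative
  rw [finrank_eq_card_of_interpolation (ι := 𝒞) _ r, ← Nat.card_eq_fintype_card]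
  · rfl
  · intro x hx zero_at_r
    by_contra hx0
    obtain ⟨T, hT, hbal, hne⟩ := exists_balanced_isSourceComponent_of_ne_zero hht hσ hx0
      fun i ↦ .inr (congrFun hx i)
    exact hne _ (hr ⟨T, hT, hbal⟩) (zero_at_r ⟨T, hT, hbal⟩)
  · intro T
    obtain ⟨x, hx, x_r, x_eq_zero⟩ :=
      exists_Ls_mulVec_eq_zero_of_sccBalanced hht hσ T.2.1 T.2.2 (hr T)
    refine ⟨x, hx, funext fun T' ↦ ?_⟩
    rcases eq_or_ne T' T with rfl | hne
    · rw [Function.comp_apply, x_r, Pi.single_eq_same]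
    · rw [Function.comp_apply, Pi.single_eq_of_ne hne]
      exact x_eq_zero T'.1 T'.2.1 (Subtype.coe_injective.ne hne) _ (hr T')

end SignedLaplacian

theorem zero_multiplicity_multileader_general {N M : ℕ}
    (head tail : Fin M → Fin N) (σ : Fin M → ℝ)
    (hht : ∀ k, head k ≠ tail k) (hσ : ∀ k, σ k = 1 ∨ σ k = -1) :
    Polynomial.rootMultiplicity 0 (((Ls head tail σ).map ((↑) : ℝ → ℂ)).charpoly) =
      {i | IsRootNode tail i}.ncard +
        {T | IsRootedSCC head tail T ∧ SCCBalanced head tail σ T}.ncard ∧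
    ∀ μ : ℂ, (((Ls head tail σ).map ((↑) : ℝ → ℂ)).charpoly).IsRoot μ → μ ≠ 0 →
      0 < μ.re := by
  have dominant := isWeaklyDiagDominant_Ls hht hσ
  refine ⟨?_, fun μ ↦ dominant.re_pos_of_isRoot_charpoly⟩
  rw [dominant.rootMultiplicity_zero_charpoly, finrank_ker_Ls hht hσ,
    ncard_balanced_isSourceComponent hht]

theorem zero_multiplicity_multileader {N M l₁ l₂ l2SB : ℕ}
    (head tail : Fin M → Fin N) (σ : Fin M → ℝ) (S : Fin l₂ → Finset (Fin N))
    (hht : ∀ k, head k ≠ tail k)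
    (hinj : ∀ k k', head k = head k' → tail k = tail k' → k = k')
    (hσ : ∀ k, σ k = 1 ∨ σ k = -1)
    (hdss : ∀ k k', head k = tail k' → tail k = head k' → σ k = σ k')
    -- multi-leader assumption:
    (hroots : {i : Fin N | IsRootNode tail i}.ncard = l₁)
    (hSCCs : ∀ j, IsRootedSCC head tail (S j))
    (hall : ∀ T : Finset (Fin N), IsRootedSCC head tail T → ∃ j, T = S j)
    (hdisj : ∀ j j', j ≠ j' → Disjoint (S j) (S j'))
    (hSBcount : {j : Fin l₂ | SCCBalanced head tail σ (S j)}.ncard = l2SB)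
    (hm : 1 < l₁ + l₂)
    (hreach : ∀ i : Fin N, ¬ IsRootNode tail i → (∀ j, i ∉ S j) →
      ∃ a, (IsRootNode tail a ∨ ∃ j, a ∈ S j) ∧ Reaches head tail a i)
    :
    Polynomial.rootMultiplicity 0 (((Ls head tail σ).map ((↑) : ℝ → ℂ)).charpoly) =
      l₁ + l2SB ∧
    ∀ μ : ℂ, (((Ls head tail σ).map ((↑) : ℝ → ℂ)).charpoly).IsRoot μ → μ ≠ 0 →
      0 < μ.re := by
  rw [← hroots, ← hSBcount, ← ncard_balanced_isRootedSCC hSCCs hall hdisj]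
  exact zero_multiplicity_multileader_general head tail σ hht hσ
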